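/- arXiv:0704.1975 — 2 statements merged into one kernel-verified Lean document; each statement's English description precedes it below -/
import Mathlib

section
/- Let (X, μ) be a finite measure space and, for each t ∈ [0,∞), let f(·;t) : X → [0,∞) be an integrable function; set F(t) = ∫_X f(x;t) dμ(x). Assume that for every x ∈ X the function t ↦ f(x;t) is nondecreasing, and that F(t) → ∞ as t → ∞. Let a > 0 and suppose F(t) = O(e^{at}) as t → ∞. Then for every ε > 0 and μ-almost every x ∈ X one has f(x;t) = O(e^{(a+ε)t}) as t → ∞. -/
open MeasureTheory Filter Asymptotics

/-!
Put `b = a + ε`. The integrals of `e^(-b n) f(·; n)` over `n : ℕ` are `O(e^(-ε n))`, hence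
summable, so for almost every `x` the series `∑ e^(-b n) f(x; n)` converges and its terms tend to
zero. Monotonicity then bounds `f(x; t)` by `f(x; ⌈t⌉)`, and `e^(b ⌈t⌉)` is at most
`e^|b|` times `e^(b t)`.
-/

section Sequences

variable {X E : Type*} [MeasurableSpace X] {μ : Measure X} [NormedAddCommGroup E]

lemma ae_summable_norm_of_summable_integral_norm {ι : Type*} [Countable ι] {f : ι → X → E}
    (hf : ∀ i, Integrable (f i) μ) (hsum : Summable fun i => ∫ x, ‖f i x‖ ∂μ) :
    ∀ᵐ x ∂μ, Summable fun i => ‖f i x‖ := by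
  refine summable_norm_of_tsum_eLpNorm_ne_top le_rfl (fun i => (hf i).aestronglyMeasurable) ?_
  simp_rw [eLpNorm_one_eq_lintegral_enorm, ← ofReal_integral_norm_eq_lintegral_enorm (hf _)]
  exact hsum.tsum_ofReal_ne_top

lemma ae_isLittleO_cofinite_of_summable_integral_norm_div {ι : Type*} [Countable ι]
    {f : ι → X → E} {w : ι → ℝ} (hw : ∀ i, 0 < w i) (hf : ∀ i, Integrable (f i) μ)
    (hsum : Summable fun i => (∫ x, ‖f i x‖ ∂μ) / w i) :
    ∀ᵐ x ∂μ, (fun i => f i x) =o[cofinite] w := by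
  have norm_ratio (i : ι) (x : X) : ‖‖f i x‖ / w i‖ = ‖f i x‖ / w i :=
    Real.norm_of_nonneg (div_nonneg (norm_nonneg _) (hw i).le)
  have ae_summable : ∀ᵐ x ∂μ, Summable fun i => ‖f i x‖ / w i := by
    simpa only [norm_ratio] using
      ae_summable_norm_of_summable_integral_norm (fun i => (hf i).norm.div_const (w i))
        (by simpa only [norm_ratio, integral_div] using hsum)
  filter_upwards [ae_summable] with x hx
  exact isLittleO_norm_left.1 <|
    (isLittleO_iff_tendsto fun i hi => absurd hi (hw i).ne').2 hx.tendsto_cofinite_zero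

lemma ae_isLittleO_exp_of_integral_norm_isBigO_exp {f : ℕ → X → E} {a b : ℝ} (hab : a < b)
    (hf : ∀ n, Integrable (f n) μ)
    (hO : (fun n => ∫ x, ‖f n x‖ ∂μ) =O[atTop] fun n : ℕ => Real.exp (a * n)) :
    ∀ᵐ x ∂μ, (fun n => f n x) =o[atTop] fun n : ℕ => Real.exp (b * n) := by
  have exp_div_exp (n : ℕ) : Real.exp (a * n) / Real.exp (b * n) = Real.exp (n * (a - b)) := by
    rw [← Real.exp_sub]
    ring_nf
  have summable_ratio : Summable fun n : ℕ => Real.exp (a * n) / Real.exp (b * n) := by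
    simpa only [exp_div_exp] using Real.summable_exp_nat_mul_iff.2 (sub_neg.2 hab)
  rw [← Nat.cofinite_eq_atTop]
  exact ae_isLittleO_cofinite_of_summable_integral_norm_div (fun n => Real.exp_pos _) hf <|
    summable_of_isBigO_nat summable_ratio <| by
      simpa only [div_eq_mul_inv] using hO.mul (isBigO_refl _ _)

end Sequences

lemma isBigO_exp_mul_natCeil (b : ℝ) :
    (fun t : ℝ => Real.exp (b * ⌈t⌉₊)) =O[atTop] fun t => Real.exp (b * t) := by
  refine Real.isBigO_exp_comp_exp_comp.2 <| isBoundedUnder_of_eventually_le (a := |b|) ?_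
  filter_upwards [eventually_ge_atTop 0] with t ht
  have ceil_sub_nonneg : 0 ≤ (⌈t⌉₊ : ℝ) - t := sub_nonneg.2 (Nat.le_ceil t)
  have ceil_sub_le_one : (⌈t⌉₊ : ℝ) - t ≤ 1 := by linarith [Nat.ceil_lt_add_one ht]
  calc b * ⌈t⌉₊ - b * t = b * (⌈t⌉₊ - t) := by ring
    _ ≤ |b| * (⌈t⌉₊ - t) := mul_le_mul_of_nonneg_right (le_abs_self b) ceil_sub_nonneg
    _ ≤ |b| := mul_le_of_le_one_right (abs_nonneg b) ceil_sub_le_one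

lemma isBigO_comp_natCeil_of_monotoneOn {u : ℝ → ℝ} {t₀ : ℝ} (hu : MonotoneOn u (Set.Ici t₀))
    (hu_nonneg : ∀ᶠ t in atTop, 0 ≤ u t) :
    u =O[atTop] fun t => u ⌈t⌉₊ := by
  refine IsBigO.of_norm_eventuallyLE ?_
  filter_upwards [hu_nonneg, eventually_ge_atTop t₀] with t ht_nonneg ht
  rw [Real.norm_of_nonneg ht_nonneg]
  exact hu ht (ht.trans (Nat.le_ceil t)) (Nat.le_ceil t)

lemma isBigO_exp_of_natCast_isBigO_exp {u : ℝ → ℝ} {t₀ b : ℝ} (hu : MonotoneOn u (Set.Ici t₀))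
    (hu_nonneg : ∀ᶠ t in atTop, 0 ≤ u t)
    (hO : (fun n : ℕ => u n) =O[atTop] fun n : ℕ => Real.exp (b * n)) :
    u =O[atTop] fun t => Real.exp (b * t) :=
  calc u =O[atTop] fun t => u ⌈t⌉₊ := isBigO_comp_natCeil_of_monotoneOn hu hu_nonneg
    _ =O[atTop] fun t => Real.exp (b * ⌈t⌉₊) := hO.comp_tendsto tendsto_nat_ceil_atTop
    _ =O[atTop] fun t => Real.exp (b * t) := isBigO_exp_mul_natCeil b

theorem exp_bound_cont_general {X : Type*} [MeasurableSpace X] {μ : Measure X} {f : ℝ → X → ℝ}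
    (hf_nonneg : ∀ᵐ x ∂μ, ∀ t, 0 ≤ t → 0 ≤ f t x)
    (hf_int : ∀ t, 0 ≤ t → Integrable (f t) μ)
    (hf_mono : ∀ᵐ x ∂μ, MonotoneOn (fun t => f t x) (Set.Ici 0)) {a b : ℝ} (hab : a < b)
    (hO : (fun t => ∫ x, f t x ∂μ) =O[atTop] fun t => Real.exp (a * t)) :
    ∀ᵐ x ∂μ, (fun t => f t x) =O[atTop] fun t => Real.exp (b * t) := by
  have integral_norm_eq (n : ℕ) : ∫ x, ‖f n x‖ ∂μ = ∫ x, f n x ∂μ :=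
    integral_congr_ae <| hf_nonneg.mono fun x hx => Real.norm_of_nonneg (hx n n.cast_nonneg)
  have isLittleO_natCast :
      ∀ᵐ x ∂μ, (fun n : ℕ => f n x) =o[atTop] fun n : ℕ => Real.exp (b * n) := by
    refine ae_isLittleO_exp_of_integral_norm_isBigO_exp hab (fun n => hf_int n n.cast_nonneg) ?_
    simpa only [integral_norm_eq, Function.comp_def] using
      hO.comp_tendsto tendsto_natCast_atTop_atTop
  filter_upwards [hf_nonneg, hf_mono, isLittleO_natCast] with x hx_nonneg hx_mono hx_littleO
  exact isBigO_exp_of_natCast_isBigO_exp hx_mono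
    ((eventually_ge_atTop 0).mono hx_nonneg) hx_littleO.isBigO

/-- If the averages satisfy `F(t) = O(e^(a t))` with `a > 0`, the functions are nondecreasing
in time and `F(t) → ∞`, then for every `ε > 0` and almost every `x` one has
`f(x;t) = O(e^((a+ε) t))` as `t → ∞`. -/
theorem exp_bound_cont {X : Type*} [MeasurableSpace X] (μ : Measure X) [IsFiniteMeasure μ]
    (f : ℝ → X → ℝ) (F : ℝ → ℝ)
    (hf_nonneg : ∀ t : ℝ, 0 ≤ t → ∀ x : X, 0 ≤ f t x)
    (hf_int : ∀ t : ℝ, 0 ≤ t → Integrable (f t) μ)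
    (hF : ∀ t : ℝ, 0 ≤ t → F t = ∫ x, f t x ∂μ)
    (hf_mono : ∀ x : X, ∀ s t : ℝ, 0 ≤ s → s ≤ t → f s x ≤ f t x)
    (hF_top : Tendsto F atTop atTop)
    (a : ℝ) (ha : 0 < a) (hF_O : F =O[atTop] fun t : ℝ => Real.exp (a * t)) :
    ∀ ε : ℝ, 0 < ε →
      ∀ᵐ x ∂μ, (fun t : ℝ => f t x) =O[atTop] fun t : ℝ => Real.exp ((a + ε) * t) := fun _ hε =>
  exp_bound_cont_general (.of_forall fun x t ht => hf_nonneg t ht x) hf_int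
    (.of_forall fun x s hs t _ hst => hf_mono x s t hs hst) (lt_add_of_pos_right a hε)
    (hF_O.congr' ((eventually_ge_atTop 0).mono hF) .rfl)
end

section
/- Let (X, μ) be a finite measure space and, for each t ∈ [0,∞), let f(·;t) : X → [0,∞) be an integrable function; set F(t) = ∫_X f(x;t) dμ(x). Assume that for every x ∈ X the function t ↦ f(x;t) is nondecreasing, and that F(t) → ∞ as t → ∞. Let p > 0 and suppose F(t) = O(t^p) as t → ∞. Then for every ε > 0 and μ-almost every x ∈ X one has the little-o bound f(x;t) = o(t^{p+ε}) as t → ∞. -/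
open MeasureTheory Filter Asymptotics

/-!
Along the geometric sequence `2 ^ n`, the integrals of `f (2 ^ n) / (2 ^ n) ^ (p + ε)` are
`O(2 ^ (-ε n))`, hence summable, so the functions themselves are summable, and in particular tend
to zero, almost everywhere. Monotonicity transfers the bound to all `t`, since the next power of `2`
exceeds `t` by a factor of at most `2`. Replacing `f t` by `f t - f 0` reduces to nonnegative `f`.
-/

section Growth

variable {b p q : ℝ} {u : ℝ → ℝ}

lemma le_pow_natCeil_logb (hb : 1 < b) {t : ℝ} (ht : 0 < t) : t ≤ b ^ ⌈Real.logb b t⌉₊ := by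
  rw [← Real.rpow_natCast, ← Real.logb_le_iff_le_rpow hb ht]
  exact Nat.le_ceil _

lemma pow_natCeil_logb_le_mul (hb : 1 < b) {t : ℝ} (ht : 1 ≤ t) :
    b ^ ⌈Real.logb b t⌉₊ ≤ b * t := by
  have hb0 : 0 < b := one_pos.trans hb
  have ht0 : 0 < t := one_pos.trans_le ht
  rw [← Real.rpow_natCast, ← Real.le_logb_iff_rpow_le hb (by positivity),
    Real.logb_mul hb0.ne' ht0.ne', Real.logb_self_eq_one hb, add_comm]
  exact (Nat.ceil_lt_add_one (Real.logb_nonneg hb ht)).le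

lemma isTheta_pow_natCeil_logb (hb : 1 < b) :
    (fun t : ℝ => b ^ ⌈Real.logb b t⌉₊) =Θ[atTop] fun t => t := by
  have : 0 < b := one_pos.trans hb
  refine ⟨.of_bound b ?_, .of_bound 1 ?_⟩ <;>
    filter_upwards [eventually_ge_atTop 1] with t ht <;>
    rw [Real.norm_of_nonneg (by positivity), Real.norm_of_nonneg (by positivity)]
  · exact pow_natCeil_logb_le_mul hb ht
  · simpa only [one_mul] using le_pow_natCeil_logb hb (one_pos.trans_le ht)

lemma isLittleO_rpow_of_monotoneOn_of_isLittleO_pow (hb : 1 < b) {a : ℝ}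
    (hu_mono : MonotoneOn u (Set.Ici a)) (hu_nonneg : ∀ᶠ t in atTop, 0 ≤ u t)
    (hu : (fun n : ℕ => u (b ^ n)) =o[atTop] fun n => (b ^ n) ^ q) :
    u =o[atTop] fun t => t ^ q := by
  have ceil_logb_atTop : Tendsto (fun t => ⌈Real.logb b t⌉₊) atTop atTop :=
    tendsto_nat_ceil_atTop.comp (Real.tendsto_logb_atTop hb)
  have le_next_power : u =O[atTop] fun t => u (b ^ ⌈Real.logb b t⌉₊) := by
    refine .of_bound' ?_
    filter_upwards [hu_nonneg, eventually_ge_atTop a, eventually_gt_atTop 0] with t hut hat ht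
    have ht_le := le_pow_natCeil_logb hb ht
    rw [Real.norm_of_nonneg hut]
    exact (hu_mono hat (hat.trans ht_le) ht_le).trans (Real.le_norm_self _)
  have next_power_rpow :
      (fun t : ℝ => (b ^ ⌈Real.logb b t⌉₊) ^ q) =Θ[atTop] fun t => t ^ q :=
    (isTheta_pow_natCeil_logb hb).rpow (.of_forall fun t => by positivity)
      (eventually_ge_atTop 0)
  exact (le_next_power.trans_isLittleO (hu.comp_tendsto ceil_logb_atTop)).trans_isTheta
    next_power_rpow

lemma summable_pow_div_rpow_of_isBigO_rpow (hb : 1 < b) (hpq : p < q)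
    (hu : u =O[atTop] fun t => t ^ p) :
    Summable fun n : ℕ => u (b ^ n) / (b ^ n) ^ q := by
  have hb0 : 0 < b := one_pos.trans hb
  have geometric : Summable fun n : ℕ => (b ^ (p - q)) ^ n :=
    summable_geometric_of_lt_one (by positivity)
      (Real.rpow_lt_one_of_one_lt_of_neg hb (sub_neg.2 hpq))
  have ratio_eq (n : ℕ) : (b ^ n) ^ p / (b ^ n) ^ q = (b ^ (p - q)) ^ n := by
    rw [← Real.rpow_sub (by positivity), Real.rpow_pow_comm hb0.le]
  refine summable_of_isBigO_nat geometric ?_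
  simp only [← ratio_eq, div_eq_mul_inv]
  exact (hu.comp_tendsto (tendsto_pow_atTop_atTop_of_one_lt hb)).mul (isBigO_refl _ _)

end Growth

section AlmostEverywhere

variable {X : Type*} [MeasurableSpace X] {μ : Measure X}

lemma ae_isLittleO_of_summable_integral_norm_div {E : Type*} [NormedAddCommGroup E]
    {g : ℕ → X → E} {w : ℕ → ℝ} (hg : ∀ n, Integrable (g n) μ) (hw : ∀ n, 0 < w n)
    (hsum : Summable fun n => (∫ x, ‖g n x‖ ∂μ) / w n) :
    ∀ᵐ x ∂μ, (fun n => g n x) =o[atTop] w := by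
  have hint (n : ℕ) : Integrable (fun x => ‖g n x‖ / w n) μ := (hg n).norm.div_const _
  have hnorm (n : ℕ) (x : X) : ‖‖g n x‖ / w n‖ = ‖g n x‖ / w n :=
    Real.norm_of_nonneg (div_nonneg (norm_nonneg _) (hw n).le)
  have eLpNorm_eq (n : ℕ) : eLpNorm (fun x => ‖g n x‖ / w n) 1 μ =
      ENNReal.ofReal ((∫ x, ‖g n x‖ ∂μ) / w n) := by
    rw [eLpNorm_one_eq_lintegral_enorm, ← ofReal_integral_norm_eq_lintegral_enorm (hint n)]
    simp only [hnorm, integral_div]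
  have tsum_ne_top : ∑' n, eLpNorm (fun x => ‖g n x‖ / w n) 1 μ ≠ ⊤ := by
    simpa only [eLpNorm_eq] using hsum.tsum_ofReal_ne_top
  filter_upwards [summable_norm_of_tsum_eLpNorm_ne_top le_rfl
    (fun n => (hint n).aestronglyMeasurable) tsum_ne_top] with x hx
  simp only [hnorm] at hx
  exact ((isLittleO_iff_tendsto fun n hn => absurd hn (hw n).ne').2
    hx.tendsto_atTop_zero).of_norm_left

lemma ae_isLittleO_rpow_of_monotoneOn_of_nonneg {f : ℝ → X → ℝ} {p q : ℝ} (hpq : p < q)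
    (hf_zero : 0 ≤ᵐ[μ] f 0) (hf_int : ∀ t, 0 ≤ t → Integrable (f t) μ)
    (hf_mono : ∀ᵐ x ∂μ, MonotoneOn (f · x) (Set.Ici 0))
    (hf_O : (fun t => ∫ x, f t x ∂μ) =O[atTop] fun t => t ^ p) :
    ∀ᵐ x ∂μ, (f · x) =o[atTop] fun t => t ^ q := by
  have hf_nonneg : ∀ᵐ x ∂μ, ∀ t, 0 ≤ t → 0 ≤ f t x := by
    filter_upwards [hf_zero, hf_mono] with x hx0 hx t ht
    exact hx0.trans (hx Set.self_mem_Ici ht ht)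
  have integral_norm_eq (n : ℕ) : ∫ x, ‖f (2 ^ n) x‖ ∂μ = ∫ x, f (2 ^ n) x ∂μ := by
    refine integral_congr_ae ?_
    filter_upwards [hf_nonneg] with x hx using Real.norm_of_nonneg (hx _ (by positivity))
  have along_powers :
      ∀ᵐ x ∂μ, (fun n : ℕ => f (2 ^ n) x) =o[atTop] fun n => ((2 : ℝ) ^ n) ^ q := by
    refine ae_isLittleO_of_summable_integral_norm_div (fun n => hf_int _ (by positivity))
      (fun n => by positivity) ?_
    simpa only [integral_norm_eq] using
      summable_pow_div_rpow_of_isBigO_rpow one_lt_two hpq hf_O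
  filter_upwards [hf_nonneg, hf_mono, along_powers] with x hx_nonneg hx_mono hx
  exact isLittleO_rpow_of_monotoneOn_of_isLittleO_pow one_lt_two hx_mono
    ((eventually_ge_atTop 0).mono hx_nonneg) hx

theorem power_bound_littleo_cont_general {f : ℝ → X → ℝ} {p q : ℝ} (hp : 0 ≤ p) (hpq : p < q)
    (hf_int : ∀ t, 0 ≤ t → Integrable (f t) μ)
    (hf_mono : ∀ᵐ x ∂μ, MonotoneOn (f · x) (Set.Ici 0))
    (hf_O : (fun t => ∫ x, f t x ∂μ) =O[atTop] fun t => t ^ p) :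
    ∀ᵐ x ∂μ, (f · x) =o[atTop] fun t => t ^ q := by
  have const_isBigO (c : ℝ) : (fun _ : ℝ => c) =O[atTop] fun t => t ^ p := by
    refine .of_bound ‖c‖ ?_
    filter_upwards [eventually_ge_atTop 1] with t ht
    exact le_mul_of_one_le_right (norm_nonneg c)
      ((Real.one_le_rpow ht hp).trans (Real.le_norm_self _))
  have increment_O : (fun t => ∫ x, (f t x - f 0 x) ∂μ) =O[atTop] fun t => t ^ p := by
    refine (hf_O.sub (const_isBigO (∫ x, f 0 x ∂μ))).congr' ?_ .rfl
    filter_upwards [eventually_ge_atTop 0] with t ht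
    exact (integral_sub (hf_int t ht) (hf_int 0 le_rfl)).symm
  have increment_o : ∀ᵐ x ∂μ, (fun t => f t x - f 0 x) =o[atTop] fun t => t ^ q :=
    ae_isLittleO_rpow_of_monotoneOn_of_nonneg hpq (.of_forall fun x => (sub_self (f 0 x)).ge)
      (fun t ht => (hf_int t ht).sub (hf_int 0 le_rfl))
      (hf_mono.mono fun x hx s hs t ht hst => sub_le_sub_right (hx hs ht hst) _) increment_O
  have const_isLittleO (c : ℝ) : (fun _ : ℝ => c) =o[atTop] fun t => t ^ q :=
    isLittleO_const_left.2 <| .inr <|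
      tendsto_norm_atTop_atTop.comp (tendsto_rpow_atTop (hp.trans_lt hpq))
  filter_upwards [increment_o] with x hx
  simpa only [sub_add_cancel] using hx.add (const_isLittleO (f 0 x))

end AlmostEverywhere

/-- Little-o version: if the averages satisfy `F(t) = O(t^p)` with `p > 0`, the functions are
nondecreasing in time and `F(t) → ∞`, then for every `ε > 0` and almost every `x` one has
`f(x;t) = o(t^(p+ε))` as `t → ∞`. -/
theorem power_bound_littleo_cont {X : Type*} [MeasurableSpace X] (μ : Measure X)
    [IsFiniteMeasure μ]
    (f : ℝ → X → ℝ) (F : ℝ → ℝ)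
    (hf_nonneg : ∀ t : ℝ, 0 ≤ t → ∀ x : X, 0 ≤ f t x)
    (hf_int : ∀ t : ℝ, 0 ≤ t → Integrable (f t) μ)
    (hF : ∀ t : ℝ, 0 ≤ t → F t = ∫ x, f t x ∂μ)
    (hf_mono : ∀ x : X, ∀ s t : ℝ, 0 ≤ s → s ≤ t → f s x ≤ f t x)
    (hF_top : Tendsto F atTop atTop)
    (p : ℝ) (hp : 0 < p) (hF_O : F =O[atTop] fun t : ℝ => t ^ p) :
    ∀ ε : ℝ, 0 < ε →
      ∀ᵐ x ∂μ, (fun t : ℝ => f t x) =o[atTop] fun t : ℝ => t ^ (p + ε) := by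
  intro ε hε
  refine power_bound_littleo_cont_general hp.le (lt_add_of_pos_right p hε) hf_int
    (.of_forall fun x s hs t _ hst => hf_mono x s t hs hst) (hF_O.congr' ?_ .rfl)
  filter_upwards [eventually_ge_atTop 0] with t ht using hF t ht
end
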